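/- In the online Ramsey game with targets red C₄ and blue P₆, consider the position in which the five edges v₁v₂, v₂v₃, v₃v₄, v₄v₅, v₅v₆ of a path on six distinct vertices have been colored blue, red, red, red, blue respectively (case R5). From this position Builder can force a red copy of C₄ or a blue copy of P₆ within at most 6 additional rounds, so within at most 11 rounds in total. -/

import Mathlib

open SimpleGraph

/-- The set `S` of edges of the infinite complete graph on `ℕ` contains a copy of
the graph `G`: there is an injective map of the vertices of `G` into `ℕ` sending
every edge of `G` into `S`. -/
def HasCopy {V : Type*} (G : SimpleGraph V) (S : Set (Sym2 ℕ)) : Prop :=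
  ∃ f : V → ℕ, Function.Injective f ∧ ∀ a b, G.Adj a b → s(f a, f b) ∈ S

/-- `BuilderWinsIn G H R B r` means: in the online Ramsey game with targets a red copy
of `G` and a blue copy of `H`, from the position in which the edges in `R` have been
colored red and the edges in `B` have been colored blue, Builder has a strategy that
guarantees, against every Painter strategy, that within at most `r` further rounds the
colored edges contain a red copy of `G` or a blue copy of `H`.  (In each round Builder
chooses a previously unchosen non-loop edge of the infinite complete graph on `ℕ`, and
Painter immediately colors it red or blue; so Builder wins within `r + 1` rounds iff he
has already won, or he can choose an edge such that whichever color Painter gives it,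
he can win within `r` further rounds.) -/
def BuilderWinsIn {V W : Type*} (G : SimpleGraph V) (H : SimpleGraph W) :
    Set (Sym2 ℕ) → Set (Sym2 ℕ) → ℕ → Prop
  | R, B, 0 => HasCopy G R ∨ HasCopy H B
  | R, B, (r + 1) => HasCopy G R ∨ HasCopy H B ∨
      ∃ e : Sym2 ℕ, ¬ e.IsDiag ∧ e ∉ R ∧ e ∉ B ∧
        BuilderWinsIn G H (insert e R) B r ∧ BuilderWinsIn G H R (insert e B) r

/-- The online size Ramsey number `ř(G, H)`: the least `t` such that, starting from the
empty position, Builder can force a red copy of `G` or a blue copy of `H` within at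
most `t` rounds. -/
noncomputable def onlineRamsey {V W : Type*} (G : SimpleGraph V) (H : SimpleGraph W) : ℕ :=
  sInf {t | BuilderWinsIn G H ∅ ∅ t}

/-!
Whenever a red path on four vertices is present, its closing edge is forced to be blue, since
painting it red completes a red `C₄`. Let `a, b, c, d, e, f` be the given path; Builder
opens with `ac`.

* If `ac` is blue, forcing `be` creates the blue path `c a b e f`, which three more moves
  extend, because `d` is a red neighbour of `c` off the path.
* If `ac` is red, then `c` has the three red neighbours `a`, `b`, `d`, and Builder plays `aw` with
  `w` new. A red `aw` makes `ae`, `bw`, `dw` forced; a blue one is answered by `bf`,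
  followed by `bd` if `bf` is blue as well, and again forced edges complete the blue path.
-/

variable {V W : Type*} {G : SimpleGraph V} {H : SimpleGraph W} {R B S : Set (Sym2 ℕ)}

namespace BuilderWinsIn

theorem of_hasCopy_red (h : HasCopy G R) (r : ℕ) : BuilderWinsIn G H R B r := by
  cases r <;> exact .inl h

theorem of_hasCopy_blue (h : HasCopy H B) (r : ℕ) : BuilderWinsIn G H R B r := by
  cases r
  · exact .inr h
  · exact .inr (.inl h)

theorem succ {r : ℕ} (h : BuilderWinsIn G H R B r) : BuilderWinsIn G H R B (r + 1) := by
  induction r generalizing R B with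
  | zero => exact h.elim (of_hasCopy_red · 1) (of_hasCopy_blue · 1)
  | succ r ih =>
    obtain hG | hH | ⟨e, hdiag, heR, heB, hred, hblue⟩ := h
    · exact of_hasCopy_red hG _
    · exact of_hasCopy_blue hH _
    · exact .inr (.inr ⟨e, hdiag, heR, heB, ih hred, ih hblue⟩)

/-- The edge `ab` may already be colored: repeating a move only wastes a round. -/
theorem of_move {r : ℕ} {a b : ℕ} (hab : a ≠ b)
    (hred : BuilderWinsIn G H (insert s(a, b) R) B r)
    (hblue : BuilderWinsIn G H R (insert s(a, b) B) r) : BuilderWinsIn G H R B (r + 1) := by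
  by_cases hR : s(a, b) ∈ R
  · rw [Set.insert_eq_of_mem hR] at hred
    exact hred.succ
  by_cases hB : s(a, b) ∈ B
  · rw [Set.insert_eq_of_mem hB] at hblue
    exact hblue.succ
  exact .inr (.inr ⟨s(a, b), by simpa using hab, hR, hB, hred, hblue⟩)

end BuilderWinsIn

/-- The list `l` enumerates, in order, the vertices of a path all of whose edges lie in `S`. -/
def IsPathIn (S : Set (Sym2 ℕ)) (l : List ℕ) : Prop :=
  l.Nodup ∧ l.IsChain fun a b ↦ s(a, b) ∈ S

namespace IsPathIn

variable {l : List ℕ} {x y : ℕ}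

theorem mono {T : Set (Sym2 ℕ)} (hST : S ⊆ T) (h : IsPathIn S l) : IsPathIn T l :=
  ⟨h.1, h.2.imp fun _ _ hab ↦ hST hab⟩

theorem cons (h : IsPathIn S (x :: l)) (hy : y ∉ x :: l) (hyx : s(y, x) ∈ S) :
    IsPathIn S (y :: x :: l) :=
  ⟨List.nodup_cons.2 ⟨hy, h.1⟩, List.isChain_cons_cons.2 ⟨hyx, h.2⟩⟩

theorem reverse (h : IsPathIn S l) : IsPathIn S l.reverse :=
  ⟨List.nodup_reverse.2 h.1, List.isChain_reverse.2 <| by simpa only [Sym2.eq_swap] using h.2⟩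

theorem edge_get_mem (h : IsPathIn S l) {i j : Fin l.length} (hij : i.val + 1 = j.val) :
    s(l.get i, l.get j) ∈ S := by
  simpa only [List.get_eq_getElem, hij] using List.isChain_iff_getElem.1 h.2 i (by lia)

theorem hasCopy_pathGraph {n : ℕ} (h : IsPathIn S l) (hn : l.length = n) :
    HasCopy (pathGraph n) S := by
  subst hn
  refine ⟨l.get, h.1.injective_get, fun i j hij ↦ ?_⟩
  obtain hij | hji := pathGraph_adj.1 hij
  · exact h.edge_get_mem hij
  · exact Sym2.eq_swap ▸ h.edge_get_mem hji

theorem hasCopy_cycleGraph (h : IsPathIn S l) (hl : l ≠ [])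
    (hclose : s(l.getLast hl, l.head hl) ∈ S) : HasCopy (cycleGraph l.length) S := by
  have hsucc (i j : Fin l.length) (hij : (j - i).val = 1) : s(l.get i, l.get j) ∈ S := by
    obtain hle | hlt := le_or_gt i j
    · rw [Fin.sub_val_of_le hle] at hij
      exact h.edge_get_mem (by lia)
    · rw [Fin.coe_sub_iff_lt.2 hlt] at hij
      obtain ⟨hi, hj⟩ : i.val = l.length - 1 ∧ j.val = 0 := by lia
      simpa only [List.get_eq_getElem, hi, hj, List.getLast_eq_getElem,
        List.head_eq_getElem_zero] using hclose
  refine ⟨l.get, h.1.injective_get, fun i j hij ↦ ?_⟩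
  obtain hij | hij := cycleGraph_adj'.1 hij
  · exact Sym2.eq_swap ▸ hsucc j i hij
  · exact hsucc i j hij

theorem hasCopy_pathGraph_insert {n : ℕ} (h : IsPathIn S (x :: l)) (hy : y ∉ x :: l)
    (hn : l.length + 2 = n) : HasCopy (pathGraph n) (insert s(x, y) S) := by
  have hpath : IsPathIn (insert s(x, y) S) (y :: x :: l) :=
    (h.mono (Set.subset_insert _ _)).cons hy (by simp [Sym2.eq_swap])
  exact hpath.hasCopy_pathGraph hn

end IsPathIn

namespace BuilderWinsIn

theorem of_forced_blue {a b c d r : ℕ} (hpath : IsPathIn R [a, b, c, d])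
    (h : BuilderWinsIn (cycleGraph 4) H R (insert s(a, d) B) r) :
    BuilderWinsIn (cycleGraph 4) H R B (r + 1) := by
  have hcycle : HasCopy (cycleGraph 4) (insert s(a, d) R) :=
    (hpath.mono (Set.subset_insert _ _)).hasCopy_cycleGraph (List.cons_ne_nil _ _)
      (by simp [Sym2.eq_swap])
  have had : a ≠ d := by rintro rfl; simpa using hpath.1
  exact of_move had (of_hasCopy_red hcycle r) h

theorem of_blue_path_of_red_pendant {l : List ℕ} {x y c : ℕ} (hblue : IsPathIn B (x :: l ++ [y]))
    (hred : s(x, c) ∈ R) (hc : c ∉ x :: l ++ [y]) :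
    BuilderWinsIn (cycleGraph 4) (pathGraph (l.length + 3)) R B 3 := by
  obtain ⟨w, hw⟩ := Infinite.exists_notMem_finset (c :: x :: l ++ [y]).toFinset
  rw [List.mem_toFinset] at hw
  have hwl : w ∉ x :: l ++ [y] := fun h ↦ hw (List.mem_cons_of_mem c h)
  have hxy : x ≠ y := by rintro rfl; simpa using hblue.1
  have win_at_x {z : ℕ} (hz : z ∉ x :: l ++ [y]) :
      HasCopy (pathGraph (l.length + 3)) (insert s(x, z) B) :=
    hblue.hasCopy_pathGraph_insert hz (by simp)
  have win_at_y {z : ℕ} (hz : z ∉ x :: l ++ [y]) :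
      HasCopy (pathGraph (l.length + 3)) (insert s(y, z) B) := by
    have hrev : IsPathIn B (y :: (l.reverse ++ [x])) := by simpa using hblue.reverse
    exact hrev.hasCopy_pathGraph_insert (by grind) (by simp)
  refine of_move (a := x) (b := w) (by grind) ?_ (of_hasCopy_blue (win_at_x hwl) 2)
  refine of_move (a := y) (b := c) (by grind) ?_ (of_hasCopy_blue (win_at_y hc) 1)
  have hred_path : IsPathIn (insert s(y, c) (insert s(x, w) R)) [y, c, x, w] :=
    ⟨by grind, by simp [Sym2.eq_swap, hred]⟩
  exact of_forced_blue hred_path (of_hasCopy_blue (win_at_y hwl) 0)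

variable {a b c d e f w : ℕ}

theorem of_red_chord_of_red_pendant (hnodup : [a, b, c, d, e, f, w].Nodup)
    (hac : s(a, c) ∈ R) (hbc : s(b, c) ∈ R) (hcd : s(c, d) ∈ R) (hde : s(d, e) ∈ R)
    (hab : s(a, b) ∈ B) (hef : s(e, f) ∈ B) (haw : s(a, w) ∈ R) :
    BuilderWinsIn (cycleGraph 4) (pathGraph 6) R B 3 := by
  have hae : IsPathIn R [a, c, d, e] := ⟨by grind, by simp [*]⟩
  have hbw : IsPathIn R [b, c, a, w] := ⟨by grind, by simp [Sym2.eq_swap, *]⟩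
  have hdw : IsPathIn R [d, c, a, w] := ⟨by grind, by simp [Sym2.eq_swap, *]⟩
  refine .of_forced_blue hae <| .of_forced_blue hbw <| .of_forced_blue hdw <|
    .of_hasCopy_blue (IsPathIn.hasCopy_pathGraph (l := [f, e, a, b, w, d]) ?_ rfl) 0
  exact ⟨by grind, by simp [Sym2.eq_swap, *]⟩

theorem of_red_chord_of_blue_pendant (hnodup : [a, b, c, d, e, f, w].Nodup)
    (hac : s(a, c) ∈ R) (hbc : s(b, c) ∈ R) (hcd : s(c, d) ∈ R) (hde : s(d, e) ∈ R)
    (hab : s(a, b) ∈ B) (hef : s(e, f) ∈ B) (haw : s(a, w) ∈ B) :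
    BuilderWinsIn (cycleGraph 4) (pathGraph 6) R B 3 := by
  refine .of_move (a := b) (b := f) (by grind) ?_ (.of_move (a := b) (b := d) (by grind) ?_ ?_)
  · have hbe : IsPathIn (insert s(b, f) R) [b, c, d, e] := ⟨by grind, by simp [*]⟩
    have hfd : IsPathIn (insert s(b, f) R) [f, b, c, d] :=
      ⟨by grind, by simp [Sym2.eq_swap, *]⟩
    refine .of_forced_blue hbe <| .of_forced_blue hfd <|
      .of_hasCopy_blue (IsPathIn.hasCopy_pathGraph (l := [w, a, b, e, f, d]) ?_ rfl) 0
    exact ⟨by grind, by simp [Sym2.eq_swap, *]⟩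
  · have hce : IsPathIn (insert s(b, d) R) [c, b, d, e] :=
      ⟨by grind, by simp [Sym2.eq_swap, *]⟩
    refine .of_forced_blue hce <|
      .of_hasCopy_blue (IsPathIn.hasCopy_pathGraph (l := [w, a, b, f, e, c]) ?_ rfl) 0
    exact ⟨by grind, by simp [Sym2.eq_swap, *]⟩
  · have hae : IsPathIn R [a, c, d, e] := ⟨by grind, by simp [*]⟩
    refine .of_forced_blue hae <|
      .of_hasCopy_blue (IsPathIn.hasCopy_pathGraph (l := [w, a, e, f, b, d]) ?_ rfl) 0
    exact ⟨by grind, by simp [Sym2.eq_swap, *]⟩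

theorem of_red_chord (hnodup : [a, b, c, d, e, f].Nodup)
    (hac : s(a, c) ∈ R) (hbc : s(b, c) ∈ R) (hcd : s(c, d) ∈ R) (hde : s(d, e) ∈ R)
    (hab : s(a, b) ∈ B) (hef : s(e, f) ∈ B) :
    BuilderWinsIn (cycleGraph 4) (pathGraph 6) R B 4 := by
  obtain ⟨w, hw⟩ := Infinite.exists_notMem_finset [a, b, c, d, e, f].toFinset
  have hnodup' : [a, b, c, d, e, f, w].Nodup := by
    rw [List.mem_toFinset] at hw
    grind
  refine .of_move (a := a) (b := w) (by grind) ?_ ?_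
  · exact of_red_chord_of_red_pendant hnodup' (.inr hac) (.inr hbc) (.inr hcd) (.inr hde) hab hef
      (.inl rfl)
  · exact of_red_chord_of_blue_pendant hnodup' hac hbc hcd hde (.inr hab) (.inr hef) (.inl rfl)

theorem of_blue_chord (hnodup : [a, b, c, d, e, f].Nodup)
    (hbc : s(b, c) ∈ R) (hcd : s(c, d) ∈ R) (hde : s(d, e) ∈ R)
    (hab : s(a, b) ∈ B) (hac : s(a, c) ∈ B) (hef : s(e, f) ∈ B) :
    BuilderWinsIn (cycleGraph 4) (pathGraph 6) R B 4 := by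
  have hbe : IsPathIn R [b, c, d, e] := ⟨by grind, by simp [*]⟩
  have hblue : IsPathIn (insert s(b, e) B) (c :: [a, b, e] ++ [f]) :=
    ⟨by grind, by simp [Sym2.eq_swap, *]⟩
  exact .of_forced_blue hbe <| .of_blue_path_of_red_pendant hblue hcd (by grind)

end BuilderWinsIn

theorem builder_wins_case_R5_general {a b c d e f : ℕ} (hnodup : [a, b, c, d, e, f].Nodup)
    (hab : s(a, b) ∈ B) (hbc : s(b, c) ∈ R) (hcd : s(c, d) ∈ R) (hde : s(d, e) ∈ R)
    (hef : s(e, f) ∈ B) : BuilderWinsIn (cycleGraph 4) (pathGraph 6) R B 5 := by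
  refine .of_move (a := a) (b := c) (by grind) ?_ ?_
  · exact .of_red_chord hnodup (.inl rfl) (.inr hbc) (.inr hcd) (.inr hde) hab hef
  · exact .of_blue_chord hnodup hbc hcd hde (.inr hab) (.inl rfl) (.inr hef)

/-- Case `R5`: in the online Ramsey game with targets red `C₄` and blue `P₆`,
from the position in which the five edges `v₁v₂, v₂v₃, v₃v₄, v₄v₅, v₅v₆` of a path on
six distinct vertices have been colored blue, red, red, red, blue respectively,
Builder can force a red copy of `C₄` or a blue copy of `P₆` within at most 6 additional
rounds (so within at most 11 rounds in total). -/
theorem builder_wins_case_R5 (v : Fin 6 → ℕ) (hv : Function.Injective v) :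
    BuilderWinsIn (cycleGraph 4) (pathGraph 6)
      {s(v 1, v 2), s(v 2, v 3), s(v 3, v 4)}
      {s(v 0, v 1), s(v 4, v 5)} 6 := by
  have hnodup : [v 0, v 1, v 2, v 3, v 4, v 5].Nodup := by simpa using List.nodup_ofFn.2 hv
  exact (builder_wins_case_R5_general hnodup (by simp) (by simp) (by simp) (by simp)
    (by simp)).succ
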